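/- For every subset I ⊆ Δ of the simple roots, ⟨δ, δ_I⟩ = ⟨δ_I, δ_I⟩. -/

import Mathlib

open scoped RealInnerProductSpace BigOperators

/-- A reduced crystallographic root system `Φ` in a real inner product space `E`,
together with a base (set of simple roots) `Δ`. -/
structure RootSystemBase (E : Type*) [NormedAddCommGroup E] [InnerProductSpace ℝ E] where
  /-- the set of roots -/
  Φ : Finset E
  /-- the set of simple roots (a base) -/
  Δ : Finset E
  spanning : Submodule.span ℝ (Φ : Set E) = ⊤
  zero_not_mem : (0 : E) ∉ Φ
  reduced : ∀ α ∈ Φ, ∀ t : ℝ, t • α ∈ Φ → t = 1 ∨ t = -1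
  crystallographic : ∀ α ∈ Φ, ∀ β ∈ Φ, ∃ k : ℤ, 2 * ⟪β, α⟫ / ⟪α, α⟫ = (k : ℝ)
  reflection_mem : ∀ α ∈ Φ, ∀ β ∈ Φ, β - (2 * ⟪β, α⟫ / ⟪α, α⟫) • α ∈ Φ
  base_subset : Δ ⊆ Φ
  base_indep : LinearIndependent ℝ (fun a : {x : E // x ∈ Δ} => a.1)
  base_gen : ∀ β ∈ Φ, ∃ c : E → ℤ,
      ((∀ α ∈ Δ, 0 ≤ c α) ∨ (∀ α ∈ Δ, c α ≤ 0)) ∧ β = ∑ α ∈ Δ, (c α : ℝ) • α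

namespace RootSystemBase

variable {E : Type*} [NormedAddCommGroup E] [InnerProductSpace ℝ E]

-- The set `Φ⁺` of positive roots: the roots whose coefficients on the base `Δ`
-- are nonnegative integers.
open Classical in
noncomputable def posRoots (R : RootSystemBase E) : Finset E :=
  R.Φ.filter fun β => ∃ c : E → ℤ, (∀ α ∈ R.Δ, 0 ≤ c α) ∧ β = ∑ α ∈ R.Δ, (c α : ℝ) • α

-- The Weyl vector `δ`, the half-sum of the positive roots.
noncomputable def weyl (R : RootSystemBase E) : E :=
  (1 / 2 : ℝ) • ∑ α ∈ R.posRoots, α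

-- For a subset `I ⊆ Δ` of the simple roots, `δ_I` is the half-sum of the
-- positive roots not lying in the `ℤ`-span of `I`.
open Classical in
noncomputable def deltaI (R : RootSystemBase E) (I : Finset E) : E :=
  (1 / 2 : ℝ) • ∑ α ∈ R.posRoots.filter (fun β => β ∉ Submodule.span ℤ (I : Set E)), α

end RootSystemBase

/-!
`δ_I` is the orthogonal projection of `δ` onto the orthogonal complement of `span I`. Indeed,
`δ - δ_I` is half the sum of the positive roots in `ℤI`, so it lies in `span I`. On the other hand,
for `α ∈ I` the reflection `s_α` changes only the `α`-coefficient of a root, so it permutes the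
positive roots outside `ℤI`: such a root has a positive coefficient at some simple root not in `I`,
which `s_α` keeps. Hence `s_α` fixes `δ_I`, that is, `δ_I` is orthogonal to `α`.
-/

theorem reflection_orthogonal_span_singleton_apply {E : Type*} [NormedAddCommGroup E]
    [InnerProductSpace ℝ E] (α β : E) :
    (ℝ ∙ α)ᗮ.reflection β = β - (2 * ⟪β, α⟫ / ⟪α, α⟫) • α := by
  rw [Submodule.reflection_orthogonal_apply, Submodule.reflection_singleton_apply, neg_sub,
    RCLike.ofReal_real_eq_id, id, ← real_inner_self_eq_norm_sq, real_inner_comm, mul_div_assoc,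
    mul_smul, two_smul ℕ, two_smul ℝ]

theorem sum_mem_of_forall_reflection_mem {𝕜 E : Type*} [RCLike 𝕜] [NormedAddCommGroup E]
    [InnerProductSpace 𝕜 E] (K : Submodule 𝕜 E) [K.HasOrthogonalProjection] {S : Finset E}
    (hS : ∀ β ∈ S, K.reflection β ∈ S) : ∑ β ∈ S, β ∈ K := by
  rw [← Submodule.reflection_eq_self_iff, map_sum]
  exact Finset.sum_nbij' K.reflection K.reflection hS hS (fun β _ => K.reflection_reflection β)
    (fun β _ => K.reflection_reflection β) (fun _ _ => rfl)

namespace RootSystemBase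

variable {E : Type*} [NormedAddCommGroup E] [InnerProductSpace ℝ E] (R : RootSystemBase E)
  {α β γ : E}

theorem mem_posRoots_iff : β ∈ R.posRoots ↔
    β ∈ R.Φ ∧ ∃ c : E → ℤ, (∀ α ∈ R.Δ, 0 ≤ c α) ∧ β = ∑ α ∈ R.Δ, (c α : ℝ) • α := by
  classical
  exact Finset.mem_filter

theorem reflection_mem_roots (hα : α ∈ R.Φ) (hβ : β ∈ R.Φ) : (ℝ ∙ α)ᗮ.reflection β ∈ R.Φ := by
  rw [reflection_orthogonal_span_singleton_apply]
  exact R.reflection_mem α hα β hβ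

theorem coeff_eq_of_sum_eq_sum {c d : E → ℝ} (h : ∑ α ∈ R.Δ, c α • α = ∑ α ∈ R.Δ, d α • α)
    (hγ : γ ∈ R.Δ) : c γ = d γ := by
  have hΔ : LinearIndepOn ℝ id (R.Δ : Set E) := R.base_indep
  exact linearIndepOn_finset_iffₛ.mp hΔ c d h γ hγ

theorem mem_posRoots_of_coeff_pos {c : E → ℝ} (hβ : β ∈ R.Φ) (hβc : β = ∑ α ∈ R.Δ, c α • α)
    (hγ : γ ∈ R.Δ) (hcγ : 0 < c γ) : β ∈ R.posRoots := by
  obtain ⟨d, hd | hd, hβd⟩ := R.base_gen β hβ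
  · exact R.mem_posRoots_iff.mpr ⟨hβ, d, hd, hβd⟩
  · have hcd : c γ = d γ := R.coeff_eq_of_sum_eq_sum (hβc.symm.trans hβd) hγ
    have hdγ : (d γ : ℝ) ≤ 0 := by exact_mod_cast hd γ hγ
    linarith

theorem exists_coeff_pos_of_notMem_span {I : Set E} (hβ : β ∈ R.posRoots)
    (hβI : β ∉ Submodule.span ℤ I) :
    ∃ c : E → ℝ, β = ∑ α ∈ R.Δ, c α • α ∧ ∃ γ ∈ R.Δ, γ ∉ I ∧ 0 < c γ := by
  obtain ⟨-, c, hc, hβc⟩ := R.mem_posRoots_iff.mp hβ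
  refine ⟨fun α => c α, hβc, ?_⟩
  by_contra! hcI
  refine hβI (hβc ▸ Submodule.sum_mem _ fun α hα => ?_)
  rw [Int.cast_smul_eq_zsmul]
  by_cases hαI : α ∈ I
  · exact Submodule.smul_mem _ _ (Submodule.subset_span hαI)
  · have hcα : c α = 0 := le_antisymm (by exact_mod_cast hcI α hα hαI) (hc α hα)
    rw [hcα, zero_smul]
    exact Submodule.zero_mem _

theorem reflection_mem_posRoots {I : Set E} (hα : α ∈ R.Δ) (hαI : α ∈ I)
    (hβ : β ∈ R.posRoots) (hβI : β ∉ Submodule.span ℤ I) : (ℝ ∙ α)ᗮ.reflection β ∈ R.posRoots := by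
  classical
  obtain ⟨c, hβc, γ, hγ, hγI, hcγ⟩ := R.exists_coeff_pos_of_notMem_span hβ hβI
  have hsβ := R.reflection_mem_roots (R.base_subset hα) (R.mem_posRoots_iff.mp hβ).1
  have hγα : γ ≠ α := fun h => hγI (h ▸ hαI)
  set t : ℝ := 2 * ⟪β, α⟫ / ⟪α, α⟫
  refine R.mem_posRoots_of_coeff_pos (c := c - Pi.single α t) hsβ ?_ hγ (by simpa [hγα] using hcγ)
  have hsingle : ∑ x ∈ R.Δ, (Pi.single α t : E → ℝ) x • x = t • α := by
    simp [Pi.single_apply, ite_smul, hα]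
  simp only [Pi.sub_apply, sub_smul, Finset.sum_sub_distrib, hsingle, ← hβc]
  exact reflection_orthogonal_span_singleton_apply α β

theorem reflection_mem_span_iff {I : Set E} (hα : α ∈ R.Φ) (hαI : α ∈ I) (hβ : β ∈ R.Φ) :
    (ℝ ∙ α)ᗮ.reflection β ∈ Submodule.span ℤ I ↔ β ∈ Submodule.span ℤ I := by
  obtain ⟨k, hk⟩ := R.crystallographic α hα β hβ
  rw [reflection_orthogonal_span_singleton_apply, hk, Int.cast_smul_eq_zsmul]
  exact Submodule.sub_mem_iff_left _ (Submodule.smul_mem _ k (Submodule.subset_span hαI))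

theorem inner_deltaI_eq_zero {I : Finset E} (hα : α ∈ R.Δ) (hαI : α ∈ I) :
    ⟪α, R.deltaI I⟫ = 0 := by
  classical
  rw [← Submodule.mem_orthogonal_singleton_iff_inner_right]
  refine Submodule.smul_mem _ _ (sum_mem_of_forall_reflection_mem _ fun β hβ => ?_)
  obtain ⟨hβpos, hβI⟩ := Finset.mem_filter.mp hβ
  have hβΦ : β ∈ R.Φ := (R.mem_posRoots_iff.mp hβpos).1
  exact Finset.mem_filter.mpr ⟨R.reflection_mem_posRoots hα hαI hβpos hβI,
    (R.reflection_mem_span_iff (R.base_subset hα) hαI hβΦ).not.mpr hβI⟩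

theorem deltaI_mem_orthogonal_span {I : Finset E} (hI : I ⊆ R.Δ) :
    R.deltaI I ∈ (Submodule.span ℝ (I : Set E))ᗮ := by
  rw [← Submodule.span_singleton_le_iff_mem, ← Submodule.isOrtho_iff_le, Submodule.isOrtho_comm,
    Submodule.isOrtho_span]
  rintro α hα _ rfl
  exact R.inner_deltaI_eq_zero (hI hα) hα

theorem weyl_sub_deltaI_mem_span (I : Finset E) :
    R.weyl - R.deltaI I ∈ Submodule.span ℝ (I : Set E) := by
  classical
  have hsub : R.weyl - R.deltaI I =
      (1 / 2 : ℝ) • ∑ β ∈ R.posRoots with β ∈ Submodule.span ℤ (I : Set E), β := by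
    rw [weyl, deltaI, ← smul_sub, sub_eq_of_eq_add]
    convert (Finset.sum_filter_add_sum_filter_not R.posRoots
      (· ∈ Submodule.span ℤ (I : Set E)) fun β => β).symm
  rw [hsub]
  exact Submodule.smul_mem _ _ <| Submodule.sum_mem _ fun β hβ =>
    Submodule.span_subset_span ℤ ℝ _ (Finset.mem_filter.mp hβ).2

end RootSystemBase

/-- For every subset `I ⊆ Δ` of the simple roots, `⟨δ, δ_I⟩ = ⟨δ_I, δ_I⟩`. -/
theorem inner_weyl_deltaI_eq_inner_deltaI_deltaI {E : Type*} [NormedAddCommGroup E]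
    [InnerProductSpace ℝ E] [FiniteDimensional ℝ E]
    (R : RootSystemBase E) (I : Finset E) (hI : I ⊆ R.Δ) :
    ⟪R.weyl, R.deltaI I⟫ = ⟪R.deltaI I, R.deltaI I⟫ := by
  rw [← sub_eq_zero, ← inner_sub_left]
  exact Submodule.inner_right_of_mem_orthogonal (R.weyl_sub_deltaI_mem_span I)
    (R.deltaI_mem_orthogonal_span hI)
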